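/- arXiv:1909.06958 — 2 statements merged into one kernel-verified Lean document; each statement's English description precedes it below -/
import Mathlib

section
/- Let G be a simple connected graph such that dist(V(C₁), V(C₂)) ≤ 1 for any two odd cycles C₁, C₂ of G, and let I = I(G). Then for every integer m ≥ 1 and every monomial u with u ∈ (Iᵐ : 𝔪) \ Iᵐ, one has deg(u) = 2m − 1, and u can be written as u = x₁x₂⋯x_{2k+1}·e₁⋯e_{m−k−1}, where x₁ − x₂ − ⋯ − x_{2k+1} − x₁ is an odd cycle of G and each e_i is an edge of G (identified with its degree-2 monomial). -/
open MvPolynomial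

/-- The monomial `X i * X j` attached to an edge of a graph. -/
noncomputable def edgeMon {n : ℕ} (K : Type*) [Field K] :
    Sym2 (Fin n) → MvPolynomial (Fin n) K :=
  Sym2.lift ⟨fun i j => X i * X j, fun _ _ => mul_comm _ _⟩

/-!
Write monomials as multisets of vertices, and let `A` be the monoid of products of edges.

If `t + t ∈ A`, then `t` is a product of edges and odd cycles: the edges of `t + t` form closed
walks visiting each factor of `t` once, and closed walks decompose into odd cycles and edges. Two
odd cycles at distance at most one multiply to a product of edges, so at most one odd cycle is
needed, and none if the degree of `t` is even.

Now let `u ∉ Iᵐ` with `x u ∈ Iᵐ` for every variable `x`. Then `u = t w` with `t` a product of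
`m - 1` edges and `w ≠ 1`. An exchange argument gives `y² t ∈ A` for each `y ∣ w`. If `y z ∣ w`,
then `(y z t)² = (y² t) (z² t)` makes `y z t` a product of `m` edges dividing `u`, which is absurd.
Hence `w = y`, and `u² = (y² t) t` makes `u` a product of edges and one odd cycle.
-/

open SimpleGraph

section EdgeMonoid

variable {V : Type*} {G : SimpleGraph V} {m : ℕ} {s t w : Multiset V} {a b y : V}

variable (G) in
/-- The exponent vectors of the products of edges of `G`, as multisets of vertices. -/
def edgeMonoid : AddSubmonoid (Multiset V) :=
  AddSubmonoid.closure (Sym2.toMultiset '' G.edgeSet)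

variable (G) in
/-- The monomial with exponent vector `s` is divisible by a product of `m` edges of `G`, that is, it
lies in the `m`-th power of the edge ideal. -/
def DivisibleByEdges (m : ℕ) (s : Multiset V) : Prop :=
  ∃ t ∈ edgeMonoid G, t.card = 2 * m ∧ t ≤ s

theorem cons_cons_mem_edgeMonoid (h : G.Adj a b) (ht : t ∈ edgeMonoid G) :
    a ::ₘ b ::ₘ t ∈ edgeMonoid G := by
  have hab : {a, b} ∈ edgeMonoid G := AddSubmonoid.subset_closure ⟨s(a, b), h, rfl⟩
  simpa using add_mem hab ht

theorem even_card_of_mem_edgeMonoid (hs : s ∈ edgeMonoid G) : Even s.card := by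
  induction hs using AddSubmonoid.closure_induction with
  | mem s hs =>
    obtain ⟨e, -, rfl⟩ := hs
    simp [Sym2.card_toMultiset]
  | zero => simp
  | add s t _ _ hs ht => simpa using hs.add ht

theorem exists_adj_of_mem_edgeMonoid (hs : s ∈ edgeMonoid G) (ha : a ∈ s) :
    ∃ b, G.Adj a b ∧ ∃ t ∈ edgeMonoid G, s = a ::ₘ b ::ₘ t := by
  induction hs using AddSubmonoid.closure_induction with
  | mem s hs =>
    obtain ⟨e, he, rfl⟩ := hs
    obtain ⟨b, rfl⟩ := Sym2.mem_toMultiset.1 ha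
    exact ⟨b, he, 0, zero_mem _, rfl⟩
  | zero => simp at ha
  | add s t hs ht ihs iht =>
    rcases Multiset.mem_add.1 ha with ha | ha
    · obtain ⟨b, hab, r, hr, rfl⟩ := ihs ha
      exact ⟨b, hab, r + t, add_mem hr ht, by simp⟩
    · obtain ⟨b, hab, r, hr, rfl⟩ := iht ha
      exact ⟨b, hab, s + r, add_mem hs hr, by simp⟩

theorem exists_edges_of_mem_edgeMonoid (hs : s ∈ edgeMonoid G) (hm : s.card = 2 * m) :
    ∃ e : Fin m → Sym2 V, (∀ i, e i ∈ G.edgeSet) ∧ s = ∑ i, (e i).toMultiset := by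
  induction m generalizing s with
  | zero => exact ⟨Fin.elim0, fun i => i.elim0, by simpa using hm⟩
  | succ m ih =>
    obtain ⟨a, ha⟩ := Multiset.card_pos_iff_exists_mem.1 (show 0 < s.card by lia)
    obtain ⟨b, hab, t, ht, rfl⟩ := exists_adj_of_mem_edgeMonoid hs ha
    obtain ⟨e, he, rfl⟩ := ih ht (by simpa [mul_add] using hm)
    have hpair : s(a, b).toMultiset = {a, b} := rfl
    exact ⟨Fin.cons s(a, b) e, Fin.cases hab he, by simp [Fin.sum_univ_succ, hpair]⟩

theorem DivisibleByEdges.exists_cons_le (h : DivisibleByEdges G m (a ::ₘ s))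
    (hs : ¬ DivisibleByEdges G m s) :
    ∃ b, ∃ t ∈ edgeMonoid G, t.card + 2 = 2 * m ∧ b ::ₘ t ≤ s := by
  obtain ⟨r, hr, hcard, hle⟩ := h
  have har : a ∈ r := by
    by_contra har
    exact hs ⟨r, hr, hcard, (Multiset.le_cons_of_notMem har).1 hle⟩
  obtain ⟨b, -, t, ht, rfl⟩ := exists_adj_of_mem_edgeMonoid hr har
  exact ⟨b, t, ht, by simpa using hcard, (Multiset.cons_le_cons_iff a).1 hle⟩

-- Follow an edge `p a` of `t'` from `p ∈ w`: either `a ∈ w` too, or `a` is matched to some `b` in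
-- `t`, and the induction applies with the edge `a b` removed from `t` and `b` in place of `p`.
theorem exists_le_add_mem_edgeMonoid {t' w' : Multiset V} (ht : t ∈ edgeMonoid G)
    (ht' : t' ∈ edgeMonoid G) (hcard : t.card < t'.card) (h : t + w = t' + w') :
    ∃ r ≤ w, r.card = 2 ∧ r + t ∈ edgeMonoid G := by
  classical
  induction hn : t.card using Nat.strong_induction_on generalizing t t' w with
  | _ n ih =>
  obtain ⟨p, hpt', hpw⟩ : ∃ p ∈ t', p ∈ w := by
    by_contra! hdisj
    refine hcard.not_ge (Multiset.card_le_card ?_)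
    calc t' = t'.filter (· ∉ w) := (Multiset.filter_eq_self.2 hdisj).symm
      _ ≤ (t + w).filter (· ∉ w) := Multiset.filter_le_filter _ (h ▸ Multiset.le_add_right _ _)
      _ = t.filter (· ∉ w) := by simp
      _ ≤ t := Multiset.filter_le _ _
  obtain ⟨a, hpa, t₁', ht₁', rfl⟩ := exists_adj_of_mem_edgeMonoid ht' hpt'
  obtain ⟨w₁, rfl⟩ := Multiset.exists_cons_of_mem hpw
  have h₁ : t + w₁ = a ::ₘ (t₁' + w') := by simpa using h
  rcases Multiset.mem_add.1 (h₁ ▸ Multiset.mem_cons_self a _) with hat | haw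
  · obtain ⟨b, hab, t₁, ht₁, rfl⟩ := exists_adj_of_mem_edgeMonoid ht hat
    obtain ⟨r, hrw, hr, hmem⟩ := ih t₁.card (by simp [← hn]) (w := b ::ₘ w₁) ht₁ ht₁'
      (by simpa using hcard) (by simpa using h₁) rfl
    by_cases hbr : b ∈ r
    · obtain ⟨r, rfl⟩ := Multiset.exists_cons_of_mem hbr
      refine ⟨p ::ₘ r, by simpa using hrw, by simpa using hr, ?_⟩
      simpa [Multiset.cons_swap p] using cons_cons_mem_edgeMonoid hpa hmem
    · have hrw₁ : r ≤ w₁ := (Multiset.le_cons_of_notMem hbr).1 hrw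
      refine ⟨r, hrw₁.trans (Multiset.le_cons_self _ _), hr, ?_⟩
      simpa using cons_cons_mem_edgeMonoid hab hmem
  · exact ⟨{p, a}, by simpa using haw, rfl, by simpa using cons_cons_mem_edgeMonoid hpa ht⟩

theorem DivisibleByEdges.cons_cons_mem_edgeMonoid (ht : t ∈ edgeMonoid G)
    (hcard : t.card + 2 = 2 * m) (hy : y ∈ w) (h : DivisibleByEdges G m (y ::ₘ (t + w)))
    (hs : ¬ DivisibleByEdges G m (t + w)) : y ::ₘ y ::ₘ t ∈ edgeMonoid G := by
  obtain ⟨t', ht', hcard', hle⟩ := h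
  obtain ⟨w', hw'⟩ := Multiset.le_iff_exists_add.1 hle
  obtain ⟨r, hrw, hr, hmem⟩ := exists_le_add_mem_edgeMonoid (w := y ::ₘ w) ht ht' (by lia)
    (by simpa using hw')
  have hrw' : ¬ r ≤ w := fun hle =>
    hs ⟨r + t, hmem, by rw [Multiset.card_add]; lia, by rw [add_comm]; gcongr⟩
  have hyr : y ∈ r := by
    by_contra hyr
    exact hrw' ((Multiset.le_cons_of_notMem hyr).1 hrw)
  obtain ⟨r, rfl⟩ := Multiset.exists_cons_of_mem hyr
  obtain ⟨q, rfl⟩ := Multiset.card_eq_one.1 (by simpa using hr)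
  obtain rfl : y = q := by
    by_contra hyq
    exact hrw' ((Multiset.cons_le_of_notMem (by simpa using hyq)).2 ⟨hy, by simpa using hrw⟩)
  simpa using hmem

end EdgeMonoid

section OddCycles

variable {V : Type*} {G : SimpleGraph V} {s t : Multiset V} {u v : V}

variable (G) in
/-- The exponent vectors of the odd cycles of `G`. The tail of the support lists each vertex of a
cycle once. -/
def oddCycleSupports : Set (Multiset V) :=
  {s | ∃ (v : V) (c : G.Walk v v), c.IsCycle ∧ Odd c.length ∧ s = c.support.tail}

variable (G) in
/-- The exponent vectors of the products of edges and odd cycles of `G`. -/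
def edgeOddCycleMonoid : AddSubmonoid (Multiset V) :=
  edgeMonoid G ⊔ AddSubmonoid.closure (oddCycleSupports G)

theorem odd_card_of_mem_oddCycleSupports (hs : s ∈ oddCycleSupports G) : Odd s.card := by
  obtain ⟨v, c, -, hodd, rfl⟩ := hs
  simpa using hodd

theorem support_mem_edgeMonoid {u v : V} :
    ∀ p : G.Walk u v, Odd p.length → (p.support : Multiset V) ∈ edgeMonoid G
  | .nil, hodd => by simp at hodd
  | .cons h .nil, _ => cons_cons_mem_edgeMonoid h (zero_mem _)
  | .cons h (.cons _ p), hodd =>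
    cons_cons_mem_edgeMonoid h (support_mem_edgeMonoid p (by simpa [parity_simps] using hodd))

theorem support_mem_edgeOddCycleMonoid_of_isPath (h : G.Adj u v) {p : G.Walk v u}
    (hp : p.IsPath) : (p.support : Multiset V) ∈ edgeOddCycleMonoid G := by
  rcases Nat.even_or_odd p.length with heven | hodd
  · have hc : (Walk.cons h p).IsCycle := by
      refine (Walk.cons_isCycle_iff p h).2 ⟨hp, fun hmem => ?_⟩
      rw [Sym2.eq_swap] at hmem
      simp [hp.length_eq_one_of_mem_edges hmem] at heven
    exact AddSubmonoid.mem_sup_right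
      (AddSubmonoid.subset_closure ⟨u, .cons h p, hc, heven.add_one, rfl⟩)
  · exact AddSubmonoid.mem_sup_left (support_mem_edgeMonoid p hodd)

theorem exists_support_eq_bypass_support_add [DecidableEq V] (p : G.Walk u v) :
    ∃ s ∈ edgeOddCycleMonoid G, (p.support : Multiset V) = p.bypass.support + s := by
  induction p with
  | nil => exact ⟨0, zero_mem _, rfl⟩
  | @cons u v w h p ih =>
    obtain ⟨s, hs, hps⟩ := ih
    rw [Walk.bypass, Walk.support_cons, ← Multiset.cons_coe, hps]
    split_ifs with hu
    · refine ⟨(p.bypass.takeUntil u hu).support + s, add_mem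
        (support_mem_edgeOddCycleMonoid_of_isPath h (p.bypass_isPath.takeUntil hu)) hs, ?_⟩
      have hsplit : (p.bypass.support : Multiset V) =
          (p.bypass.takeUntil u hu).support + (p.bypass.dropUntil u hu).support.tail := by
        rw [Multiset.coe_add, ← Walk.support_append, Walk.take_spec]
      have hcons : ((p.bypass.dropUntil u hu).support : Multiset V) =
          u ::ₘ ((p.bypass.dropUntil u hu).support.tail : Multiset V) := by
        rw [Multiset.cons_coe, Walk.cons_tail_support]
      rw [hsplit, hcons, Multiset.cons_add]
      congr 1
      abel
    · exact ⟨s, hs, by simp [← Multiset.cons_coe]⟩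

theorem support_mem_edgeOddCycleMonoid (h : G.Adj u v) (p : G.Walk v u) :
    (p.support : Multiset V) ∈ edgeOddCycleMonoid G := by
  classical
  obtain ⟨s, hs, hps⟩ := exists_support_eq_bypass_support_add p
  rw [hps]
  exact add_mem (support_mem_edgeOddCycleMonoid_of_isPath h p.bypass_isPath) hs

theorem exists_walk_of_add_self_eq {a : Multiset V} (ha : a ∈ edgeMonoid G)
    (h : t + t = u ::ₘ v ::ₘ a) :
    ∃ (p : G.Walk u v) (r : Multiset V), t = p.support + r ∧ r + r ∈ edgeMonoid G := by
  induction hn : a.card using Nat.strong_induction_on generalizing a t v with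
  | _ n ih =>
  have hvt : v ∈ t := by
    have hv : v ∈ t + t := by simp [h]
    simpa using hv
  obtain ⟨t, rfl⟩ := Multiset.exists_cons_of_mem hvt
  have h₁ : v ::ₘ (t + t) = u ::ₘ a := by simpa [Multiset.cons_swap u v] using h
  by_cases hvu : v = u
  · subst hvu
    exact ⟨.nil, t, rfl, by rwa [(Multiset.cons_inj_right v).1 h₁]⟩
  · have hva : v ∈ a := (Multiset.mem_cons.1 (h₁ ▸ Multiset.mem_cons_self v _)).resolve_left hvu
    obtain ⟨z, hvz, a₁, ha₁, rfl⟩ := exists_adj_of_mem_edgeMonoid ha hva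
    obtain ⟨p, r, rfl, hr⟩ := ih a₁.card (by simp [← hn]) ha₁
      (by simpa [Multiset.cons_swap u v] using h₁) rfl
    refine ⟨p.concat hvz.symm, r, ?_, hr⟩
    rw [Walk.support_concat, ← Multiset.coe_add, Multiset.coe_singleton, add_right_comm,
      ← Multiset.singleton_add, add_comm]

theorem mem_edgeOddCycleMonoid_of_add_self_mem (h : t + t ∈ edgeMonoid G) :
    t ∈ edgeOddCycleMonoid G := by
  induction hn : t.card using Nat.strong_induction_on generalizing t with
  | _ n ih =>
  obtain rfl | ⟨u, hu⟩ := t.empty_or_exists_mem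
  · exact zero_mem _
  obtain ⟨v, huv, a, ha, hta⟩ :=
    exists_adj_of_mem_edgeMonoid h (Multiset.mem_add.2 (.inl hu))
  obtain ⟨p, r, rfl, hr⟩ := exists_walk_of_add_self_eq ha hta
  exact add_mem (support_mem_edgeOddCycleMonoid huv.symm p) (ih r.card (by simp [← hn]) hr rfl)

end OddCycles

section CloseOddCycles

variable {V : Type*} {G : SimpleGraph V} {m : ℕ} {s t : Multiset V} {u v : V}

variable (G) in
/-- Any two odd cycles of `G` have distance at most one. The extended distance is used so that
vertices in different components are not considered close. -/
def CloseOddCycles : Prop :=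
  ∀ (v₁ v₂ : V) (c₁ : G.Walk v₁ v₁) (c₂ : G.Walk v₂ v₂), c₁.IsCycle → c₂.IsCycle →
    Odd c₁.length → Odd c₂.length → ∃ x ∈ c₁.support, ∃ y ∈ c₂.support, G.edist x y ≤ 1

theorem CloseOddCycles.of_dist_le_one (hconn : G.Preconnected)
    (hdist : ∀ (v₁ v₂ : V) (c₁ : G.Walk v₁ v₁) (c₂ : G.Walk v₂ v₂), c₁.IsCycle → c₂.IsCycle →
      Odd c₁.length → Odd c₂.length → ∃ x ∈ c₁.support, ∃ y ∈ c₂.support, G.dist x y ≤ 1) :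
    CloseOddCycles G := by
  simpa [CloseOddCycles, ← (hconn _ _).coe_dist_eq_edist] using hdist

theorem support_tail_add_support_tail_mem_edgeMonoid (c : G.Walk u u) (d : G.Walk v v)
    (hc : Odd c.length) (hd : Odd d.length) (h : G.edist u v ≤ 1) :
    (c.support.tail + d.support.tail : Multiset V) ∈ edgeMonoid G := by
  match c, d with
  | .cons _ p, .cons hq q =>
    simp only [Walk.length_cons, parity_simps] at hc hd
    rcases edist_le_one_iff_adj_or_eq.1 h with huv | rfl
    · have hmem := support_mem_edgeMonoid (p.append (.cons huv q.reverse))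
        (by simp [parity_simps, hc, hd])
      rwa [Walk.support_append, Walk.support_cons, List.tail_cons, Walk.support_reverse,
        ← Multiset.coe_add, Multiset.coe_reverse] at hmem
    · have hmem := support_mem_edgeMonoid (p.append (.cons hq q))
        (by simp [parity_simps, hc, hd])
      simpa [Walk.support_append] using hmem

theorem CloseOddCycles.add_mem_edgeMonoid (hG : CloseOddCycles G) (hs : s ∈ oddCycleSupports G)
    (ht : t ∈ oddCycleSupports G) : s + t ∈ edgeMonoid G := by
  classical
  obtain ⟨u, c, hc, hcodd, rfl⟩ := hs
  obtain ⟨v, d, hd, hdodd, rfl⟩ := ht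
  obtain ⟨x, hx, y, hy, hxy⟩ := hG u v c d hc hd hcodd hdodd
  rw [← Multiset.coe_eq_coe.2 (c.support_rotate x hx).perm,
    ← Multiset.coe_eq_coe.2 (d.support_rotate y hy).perm]
  exact support_tail_add_support_tail_mem_edgeMonoid (c.rotate x hx) (d.rotate y hy)
    (by simpa) (by simpa) hxy

theorem CloseOddCycles.mem_edgeMonoid_or_exists_oddCycle_add (hG : CloseOddCycles G)
    (hs : s ∈ edgeOddCycleMonoid G) :
    s ∈ edgeMonoid G ∨ ∃ c ∈ oddCycleSupports G, ∃ t ∈ edgeMonoid G, s = c + t := by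
  obtain ⟨t, ht, d, hd, rfl⟩ := AddSubmonoid.mem_sup.1 hs
  clear hs
  induction hd using AddSubmonoid.closure_induction_left with
  | zero => exact .inl (by simpa using ht)
  | add_left c hc d _ ih =>
    rw [add_left_comm]
    rcases ih with hmem | ⟨c', hc', t', ht', h⟩
    · exact .inr ⟨c, hc, t + d, hmem, rfl⟩
    · rw [h, ← add_assoc]
      exact .inl (add_mem (hG.add_mem_edgeMonoid hc hc') ht')

theorem CloseOddCycles.exists_oddCycle_add_of_odd_card (hG : CloseOddCycles G)
    (hs : s + s ∈ edgeMonoid G) (hodd : Odd s.card) :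
    ∃ c ∈ oddCycleSupports G, ∃ t ∈ edgeMonoid G, s = c + t :=
  (hG.mem_edgeMonoid_or_exists_oddCycle_add
    (mem_edgeOddCycleMonoid_of_add_self_mem hs)).resolve_left
    fun hmem => Nat.not_even_iff_odd.2 hodd (even_card_of_mem_edgeMonoid hmem)

theorem CloseOddCycles.mem_edgeMonoid_of_even_card (hG : CloseOddCycles G)
    (hs : s + s ∈ edgeMonoid G) (heven : Even s.card) : s ∈ edgeMonoid G := by
  refine (hG.mem_edgeMonoid_or_exists_oddCycle_add
    (mem_edgeOddCycleMonoid_of_add_self_mem hs)).resolve_right ?_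
  rintro ⟨c, hc, t, ht, rfl⟩
  rw [Multiset.card_add] at heven
  exact Nat.not_even_iff_odd.2 ((odd_card_of_mem_oddCycleSupports hc).add_even
    (even_card_of_mem_edgeMonoid ht)) heven

theorem CloseOddCycles.card_add_one_eq_and_exists_oddCycle_add [Nonempty V] (hG : CloseOddCycles G)
    (h : ∀ x, DivisibleByEdges G m (x ::ₘ s)) (hs : ¬ DivisibleByEdges G m s) :
    s.card + 1 = 2 * m ∧ ∃ c ∈ oddCycleSupports G, ∃ t ∈ edgeMonoid G, s = c + t := by
  obtain ⟨y, t, ht, hcard, hle⟩ := (h (Classical.arbitrary V)).exists_cons_le hs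
  obtain ⟨w, rfl⟩ := Multiset.le_iff_exists_add.1 hle
  rw [Multiset.cons_add, ← Multiset.add_cons] at h hs
  have hsq : ∀ z ∈ y ::ₘ w, z ::ₘ z ::ₘ t ∈ edgeMonoid G := fun z hz =>
    DivisibleByEdges.cons_cons_mem_edgeMonoid ht hcard hz (h z) hs
  have hyy : y ::ₘ y ::ₘ t ∈ edgeMonoid G := hsq y (Multiset.mem_cons_self y w)
  obtain rfl : w = 0 := by
    by_contra hw
    obtain ⟨z, hz⟩ := Multiset.exists_mem_of_ne_zero hw
    have hyz : y ::ₘ z ::ₘ t ∈ edgeMonoid G := by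
      refine hG.mem_edgeMonoid_of_even_card ?_ (by simp [hcard])
      have hmem := add_mem hyy (hsq z (Multiset.mem_cons_of_mem hz))
      simpa [Multiset.cons_swap] using hmem
    refine hs ⟨y ::ₘ z ::ₘ t, hyz, by simpa using hcard, ?_⟩
    obtain ⟨w, rfl⟩ := Multiset.exists_cons_of_mem hz
    simp
  rw [add_zero]
  have hcard' : (y ::ₘ t).card + 1 = 2 * m := by simpa using hcard
  refine ⟨hcard', hG.exists_oddCycle_add_of_odd_card ?_ (by grind)⟩
  simpa using add_mem hyy ht

end CloseOddCycles

section EdgeIdeal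

variable {V R : Type*} [CommSemiring R] {G : SimpleGraph V} {m : ℕ}

variable (R) (G) in
/-- The edge ideal `I(G)`. -/
noncomputable def edgeIdeal : Ideal (MvPolynomial V R) :=
  Ideal.span {f | ∃ i j, G.Adj i j ∧ f = X i * X j}

theorem edgeIdeal_pow : edgeIdeal R G ^ m =
    Ideal.span ((fun s => (s.map X).prod) '' {s | s ∈ edgeMonoid G ∧ s.card = 2 * m}) := by
  induction m with
  | zero =>
    rw [pow_zero, Ideal.one_eq_top, eq_comm, Ideal.eq_top_iff_one]
    exact Ideal.subset_span ⟨0, ⟨zero_mem _, rfl⟩, by simp⟩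
  | succ m ih =>
    rw [pow_succ', ih, edgeIdeal, Ideal.span_mul_span']
    congr 1
    ext f
    constructor
    · rintro ⟨_, ⟨a, b, hab, rfl⟩, _, ⟨s, ⟨hs, hcard⟩, rfl⟩, rfl⟩
      exact ⟨a ::ₘ b ::ₘ s, ⟨cons_cons_mem_edgeMonoid hab hs, by simp [hcard, mul_add]⟩,
        by simp [mul_assoc]⟩
    · rintro ⟨s, ⟨hs, hcard⟩, rfl⟩
      obtain ⟨a, ha⟩ := Multiset.card_pos_iff_exists_mem.1 (show 0 < s.card by lia)
      obtain ⟨b, hab, t, ht, rfl⟩ := exists_adj_of_mem_edgeMonoid hs ha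
      exact ⟨X a * X b, ⟨a, b, hab, rfl⟩, (t.map X).prod,
        ⟨t, ⟨ht, by simpa [mul_add] using hcard⟩, rfl⟩, by simp [mul_assoc]⟩

theorem monomial_one_eq_prod_map_X (u : V →₀ ℕ) :
    monomial u (1 : R) = (u.toMultiset.map X).prod := by
  classical
  rw [Finsupp.toMultiset_map, Finsupp.prod_toMultiset,
    Finsupp.prod_mapDomain_index (by simp) (by simp [pow_add]), monomial_eq, map_one, one_mul]

theorem monomial_mem_edgeIdeal_pow_iff [Nontrivial R] {u : V →₀ ℕ} :
    monomial u (1 : R) ∈ edgeIdeal R G ^ m ↔ DivisibleByEdges G m u.toMultiset := by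
  classical
  have himage (S : Set (Multiset V)) : (fun s => (s.map (X : V → MvPolynomial V R)).prod) '' S =
      (fun d => monomial d 1) '' (Multiset.toFinsupp '' S) := by
    simp [Set.image_image, monomial_one_eq_prod_map_X]
  rw [edgeIdeal_pow, himage, mem_ideal_span_monomial_image]
  have hle (s : Multiset V) : s.toFinsupp ≤ u ↔ s ≤ u.toMultiset :=
    Finsupp.orderIsoMultiset.symm_apply_le
  simp [support_monomial, DivisibleByEdges, hle, and_assoc]

theorem prod_map_sym2_toMultiset {M : Type*} [CommMonoid M] (f : V → M) (e : Sym2 V) :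
    (e.toMultiset.map f).prod = (e.map f).mul := by
  induction e with | _ a b => exact Multiset.prod_pair _ _

theorem edgeMon_eq_mul_map (K : Type*) [Field K] {n : ℕ} (e : Sym2 (Fin n)) :
    edgeMon K e = (e.map X).mul := by
  induction e with | _ a b => rfl

theorem socle_element_of_close_odd_cycles_general [Nontrivial R] [Nonempty V]
    (hG : CloseOddCycles G) {u : V →₀ ℕ}
    (hu₁ : monomial u (1 : R) ∈ (edgeIdeal R G ^ m).colon (idealOfVars V R))
    (hu₂ : monomial u (1 : R) ∉ edgeIdeal R G ^ m) :
    (monomial u (1 : R)).totalDegree = 2 * m - 1 ∧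
    ∃ (k : ℕ) (v : V) (c : G.Walk v v), c.IsCycle ∧ c.length = 2 * k + 1 ∧ k + 1 ≤ m ∧
      ∃ e : Fin (m - k - 1) → Sym2 V, (∀ i, e i ∈ G.edgeSet) ∧
        monomial u (1 : R) = (c.support.tail.map X).prod * ∏ i, ((e i).map X).mul := by
  have hdvd (x : V) : DivisibleByEdges G m (x ::ₘ u.toMultiset) := by
    have hmem := Submodule.mem_colon.1 hu₁ (X x) (Ideal.subset_span ⟨x, rfl⟩)
    rw [smul_eq_mul, X, monomial_mul, one_mul, monomial_mem_edgeIdeal_pow_iff] at hmem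
    simpa [add_comm] using hmem
  obtain ⟨hcard, _, ⟨v, c, hc, ⟨k, hk⟩, rfl⟩, t, ht, hu⟩ :=
    hG.card_add_one_eq_and_exists_oddCycle_add hdvd (monomial_mem_edgeIdeal_pow_iff.not.1 hu₂)
  have hcard_add : u.toMultiset.card = 2 * k + 1 + t.card := by simp [hu, hk]
  obtain ⟨j, hj⟩ := even_card_of_mem_edgeMonoid ht
  obtain ⟨e, he, rfl⟩ := exists_edges_of_mem_edgeMonoid ht (m := m - k - 1) (by lia)
  refine ⟨?_, k, v, c, hc, hk, by lia, e, he, ?_⟩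
  · rw [totalDegree_monomial u one_ne_zero]
    rw [Finsupp.card_toMultiset] at hcard
    exact Nat.eq_sub_of_add_eq hcard
  · calc monomial u (1 : R)
      _ = (c.support.tail.map X).prod * ((∑ i, (e i).toMultiset).map X).prod := by
        rw [monomial_one_eq_prod_map_X, hu, Multiset.map_add, Multiset.prod_add, Multiset.map_coe,
          Multiset.prod_coe]
      _ = (c.support.tail.map X).prod * ∏ i, ((e i).map X).mul := by
        rw [← Multiset.coe_mapAddMonoidHom, map_sum, Multiset.prod_sum]
        simp only [Multiset.coe_mapAddMonoidHom, prod_map_sym2_toMultiset]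

end EdgeIdeal

/-- If `G` is a connected graph in which any two odd cycles have distance at
most one, then every monomial `u ∈ (Iᵐ : 𝔪) \ Iᵐ` (where `I = I(G)`) has degree `2m - 1`
and can be written as `u = x₁⋯x_{2k+1}·e₁⋯e_{m-k-1}` for an odd cycle
`x₁ - ⋯ - x_{2k+1} - x₁` of `G` and edges `e₁,…,e_{m-k-1}` of `G`. -/
theorem socle_element_of_close_odd_cycles
    {K : Type*} [Field K] {n : ℕ} (G : SimpleGraph (Fin n))
    (hconn : G.Connected)
    (hdist : ∀ (v₁ v₂ : Fin n) (c₁ : G.Walk v₁ v₁) (c₂ : G.Walk v₂ v₂),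
      c₁.IsCycle → c₂.IsCycle → Odd c₁.length → Odd c₂.length →
      ∃ x ∈ c₁.support, ∃ y ∈ c₂.support, G.dist x y ≤ 1)
    (I : Ideal (MvPolynomial (Fin n) K))
    (hI : I = Ideal.span {f | ∃ i j, G.Adj i j ∧ f = X i * X j})
    (mI : Ideal (MvPolynomial (Fin n) K)) (hmI : mI = Ideal.span (Set.range X))
    (m : ℕ) (hm : 1 ≤ m) (du : Fin n →₀ ℕ)
    (hu₁ : monomial du (1 : K) ∈ (I ^ m).colon mI)
    (hu₂ : monomial du (1 : K) ∉ I ^ m) :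
    (monomial du (1 : K)).totalDegree = 2 * m - 1 ∧
    ∃ (k : ℕ) (v : Fin n) (c : G.Walk v v), c.IsCycle ∧ c.length = 2 * k + 1 ∧ k + 1 ≤ m ∧
      ∃ e : Fin (m - k - 1) → Sym2 (Fin n), (∀ i, e i ∈ G.edgeSet) ∧
        monomial du (1 : K) = (c.support.tail.map X).prod * ∏ i, edgeMon K (e i) := by
  subst hI hmI
  obtain ⟨hpre, _⟩ := hconn
  simpa only [edgeMon_eq_mul_map] using
    socle_element_of_close_odd_cycles_general (.of_dist_le_one hpre hdist) hu₁ hu₂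
end

section
/- Let a = (a₁,…,a_n) with a_i ≥ 1 for all i, let d ≥ 1 with a₁ + ⋯ + a_n > d, let I = I_{a,d} ⊆ S = K[x₁,…,x_n] be the corresponding ideal of Veronese type, and let k₀ be the least integer k ≥ 1 such that k(a₁+⋯+a_n − d) ≥ n − 1. Then the following are equivalent: (i) (I^{k+1} : 𝔪) = I^{k+1} + I·(I^k : 𝔪) for every k ≥ k₀ (i.e., Soc*(I) is equi-generated, equivalently Soc(I) is equi-generated); (ii) for every subset A ⊆ {1,…,n} with a(A) := Σ_{i∈A} a_i > d, one has k₀(a(A) − d) ≥ |A| − 1. -/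
open MvPolynomial

/-!
Write `𝟙` for the all-ones vector. Then `(I_{b+𝟙,f+1} : 𝔪) = I_{b+𝟙,f+1} + I_{b,f}` and
`I_{a,d}^k = I_{ka,kd}`, so for `b = ka - 𝟙` and `f = kd - 1` a comparison of degrees turns
`(I^{k+1} : 𝔪) = I^{k+1} + I (I^k : 𝔪)` into `I_{a,d} I_{b,f} = I_{a+b,d+f}`. When the right-hand
side is nonzero, such an equality holds exactly if no set `A` of variables makes `a(A) - d` and
`b(A) - f` of opposite signs. Here `b(A) - f = k (a(A) - d) - (|A| - 1)`, which is nonpositive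
whenever `a(A) < d`, so what remains is `k (a(A) - d) ≥ |A| - 1` whenever `a(A) > d`; this
condition weakens as `k` grows.
-/

section Exponents

variable {σ : Type*}

lemma sum_le_degree (u : σ →₀ ℕ) (A : Finset σ) : ∑ i ∈ A, u i ≤ u.degree := by
  classical
  rw [Finsupp.degree_apply, ← Finset.sum_filter_add_sum_filter_not A (u · = 0),
    Finset.sum_eq_zero fun i hi => (Finset.mem_filter.1 hi).2, zero_add]
  exact Finset.sum_le_sum_of_subset fun i hi =>
    Finsupp.mem_support_iff.2 (Finset.mem_filter.1 hi).2

lemma degree_tsub_le {w b : σ →₀ ℕ} {e : ℕ}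
    (h : ∀ A : Finset σ, ∑ i ∈ A, w i ≤ e + ∑ i ∈ A, b i) : (w - b).degree ≤ e := by
  have hlt : ∀ i ∈ (w - b).support, b i ≤ w i := fun i hi => by
    rw [Finsupp.mem_support_iff, Finsupp.tsub_apply] at hi
    omega
  calc (w - b).degree = ∑ i ∈ (w - b).support, (w i - b i) := rfl
    _ = ∑ i ∈ (w - b).support, w i - ∑ i ∈ (w - b).support, b i :=
      Finset.sum_tsub_distrib _ hlt
    _ ≤ e := tsub_le_iff_right.2 (h _)

lemma exists_between_degree_eq {l h : σ →₀ ℕ} {m : ℕ} (hlh : l ≤ h) (hl : l.degree ≤ m)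
    (hh : m ≤ h.degree) : ∃ u, l ≤ u ∧ u ≤ h ∧ u.degree = m := by
  have hdeg : (h - l).degree + l.degree = h.degree := by
    rw [← map_add, tsub_add_cancel_of_le hlh]
  obtain ⟨g, hg, hgm⟩ := Finsupp.exists_le_degree_eq (h - l) (m - l.degree) (by omega)
  refine ⟨l + g, le_self_add, ?_, ?_⟩
  · exact (add_le_add_right hg l).trans_eq (add_tsub_cancel_of_le hlh)
  · rw [map_add, hgm, add_tsub_cancel_of_le hl]

lemma exists_le_degree_eq_le_sum {c : σ →₀ ℕ} {A : Finset σ} {m p : ℕ} (hpm : p ≤ m)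
    (hm : m ≤ c.degree) (hp : p ≤ ∑ i ∈ A, c i) :
    ∃ w ≤ c, w.degree = m ∧ p ≤ ∑ i ∈ A, w i := by
  classical
  set cA := c.filter (· ∈ A)
  have hcA : cA ≤ c := fun i => by
    simp only [cA, Finsupp.filter_apply]
    split_ifs <;> simp
  have hsum : ∑ i ∈ A, c i = ∑ i ∈ A, cA i :=
    Finset.sum_congr rfl fun i hi => by simp [cA, hi]
  obtain ⟨l, hl, rfl⟩ :=
    Finsupp.exists_le_degree_eq cA p (hp.trans (hsum.trans_le (sum_le_degree _ _)))
  have hlA : l.support ⊆ A := fun i hi => by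
    by_contra hiA
    have := hl i
    simp_all [cA]
  obtain ⟨w, hlw, hwc, hwm⟩ := exists_between_degree_eq (hl.trans hcA) hpm hm
  refine ⟨w, hwc, hwm, ?_⟩
  calc l.degree ≤ ∑ i ∈ A, l i := Finset.sum_le_sum_of_subset hlA
    _ ≤ ∑ i ∈ A, w i := Finset.sum_le_sum fun i _ => hlw i

/-- The exponent vectors of the generators of the ideal of Veronese type `I_{c,e}`. -/
def veroneseExponents (c : σ →₀ ℕ) (e : ℕ) : Set (σ →₀ ℕ) :=
  {u | u ≤ c ∧ u.degree = e}

open Pointwise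

variable {c b : σ →₀ ℕ} {e f : ℕ}

lemma veroneseExponents_add_subset :
    veroneseExponents c e + veroneseExponents b f ⊆ veroneseExponents (c + b) (e + f) := by
  rintro _ ⟨u, ⟨huc, rfl⟩, v, ⟨hvb, rfl⟩, rfl⟩
  exact ⟨add_le_add huc hvb, map_add _ _ _⟩

lemma mem_veroneseExponents_add {w : σ →₀ ℕ} (hw : w ∈ veroneseExponents (c + b) (e + f))
    (hb : (w - b).degree ≤ e) (hc : (w - c).degree ≤ f) :
    w ∈ veroneseExponents c e + veroneseExponents b f := by
  obtain ⟨hwcb, hwdeg⟩ := hw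
  have hmin : e ≤ (w ⊓ c).degree := by
    have hsplit : (w - c).degree + (w ⊓ c).degree = e + f := by
      rw [← map_add, ← hwdeg]
      congr 1
      ext i
      simp only [Finsupp.add_apply, Finsupp.tsub_apply, Finsupp.inf_apply]
      omega
    omega
  have hle : w - b ≤ w ⊓ c := le_inf tsub_le_self (tsub_le_iff_right.2 hwcb)
  obtain ⟨u, hbu, huw, hudeg⟩ := exists_between_degree_eq hle hb hmin
  have huw' : u ≤ w := huw.trans inf_le_left
  refine ⟨u, ⟨huw.trans inf_le_right, hudeg⟩, w - u, ⟨tsub_le_iff_tsub_le.1 hbu, ?_⟩,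
    add_tsub_cancel_of_le huw'⟩
  have : u.degree + (w - u).degree = w.degree := by rw [← map_add, add_tsub_cancel_of_le huw']
  omega

lemma veroneseExponents_add
    (h : ∀ A : Finset σ,
      (e < ∑ i ∈ A, c i → f ≤ ∑ i ∈ A, b i) ∧ (f < ∑ i ∈ A, b i → e ≤ ∑ i ∈ A, c i)) :
    veroneseExponents c e + veroneseExponents b f = veroneseExponents (c + b) (e + f) := by
  refine veroneseExponents_add_subset.antisymm fun w hw => ?_
  have hbox (A : Finset σ) : ∑ i ∈ A, w i ≤ ∑ i ∈ A, c i + ∑ i ∈ A, b i := by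
    rw [← Finset.sum_add_distrib]
    exact Finset.sum_le_sum fun i _ => hw.1 i
  have hdeg (A : Finset σ) : ∑ i ∈ A, w i ≤ e + f := hw.2 ▸ sum_le_degree w A
  refine mem_veroneseExponents_add hw (degree_tsub_le fun A => ?_) (degree_tsub_le fun A => ?_)
  all_goals
    have := h A
    have := hbox A
    have := hdeg A
    omega

lemma le_sum_of_veroneseExponents_add (hcb : e + f ≤ (c + b).degree)
    (h : veroneseExponents c e + veroneseExponents b f = veroneseExponents (c + b) (e + f))
    {A : Finset σ} (hA : e < ∑ i ∈ A, c i) : f ≤ ∑ i ∈ A, b i := by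
  by_contra! hfA
  have hsum : ∑ i ∈ A, (c + b) i = ∑ i ∈ A, c i + ∑ i ∈ A, b i := Finset.sum_add_distrib
  obtain ⟨w, hwcb, hwdeg, hwA⟩ := exists_le_degree_eq_le_sum
    (show e + ∑ i ∈ A, b i + 1 ≤ e + f by omega) hcb (A := A) (by omega)
  obtain ⟨u, hu, v, hv, rfl⟩ := Set.mem_add.1 (h.ge ⟨hwcb, hwdeg⟩)
  have huA : ∑ i ∈ A, u i ≤ e := hu.2 ▸ sum_le_degree u A
  have hvA : ∑ i ∈ A, v i ≤ ∑ i ∈ A, b i := Finset.sum_le_sum fun i _ => hv.1 i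
  have : ∑ i ∈ A, (u + v) i = ∑ i ∈ A, u i + ∑ i ∈ A, v i := Finset.sum_add_distrib
  omega

theorem veroneseExponents_add_eq_iff (hcb : e + f ≤ (c + b).degree) :
    veroneseExponents c e + veroneseExponents b f = veroneseExponents (c + b) (e + f) ↔
      ∀ A : Finset σ,
        (e < ∑ i ∈ A, c i → f ≤ ∑ i ∈ A, b i) ∧ (f < ∑ i ∈ A, b i → e ≤ ∑ i ∈ A, c i) := by
  refine ⟨fun h A => ⟨le_sum_of_veroneseExponents_add hcb h, ?_⟩, veroneseExponents_add⟩
  rw [add_comm, add_comm c, add_comm e] at h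
  rw [add_comm c, add_comm e] at hcb
  exact le_sum_of_veroneseExponents_add hcb h

end Exponents

section MonomialIdeal

variable {σ R : Type*} [CommSemiring R]

variable (R) in
/-- The monomial ideal generated by the monomials with exponent vector in `S`. -/
noncomputable def monomialIdeal (S : Set (σ →₀ ℕ)) : Ideal (MvPolynomial σ R) :=
  Ideal.span ((fun s => monomial s (1 : R)) '' S)

variable {S T U : Set (σ →₀ ℕ)}

lemma mem_monomialIdeal {p : MvPolynomial σ R} :
    p ∈ monomialIdeal R S ↔ ∀ s ∈ p.support, ∃ t ∈ S, t ≤ s :=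
  mem_ideal_span_monomial_image

lemma monomialIdeal_le_iff [Nontrivial R] :
    monomialIdeal R S ≤ monomialIdeal R T ↔ ∀ s ∈ S, ∃ t ∈ T, t ≤ s := by
  classical
  rw [monomialIdeal, Ideal.span_le, Set.image_subset_iff]
  exact forall₂_congr fun s _ => by simp [mem_monomialIdeal, support_monomial]

lemma monomialIdeal_union :
    monomialIdeal R (S ∪ T) = monomialIdeal R S ⊔ monomialIdeal R T := by
  simp only [monomialIdeal, Set.image_union, Ideal.span_union]

open Pointwise in
lemma monomialIdeal_mul :
    monomialIdeal R S * monomialIdeal R T = monomialIdeal R (S + T) := by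
  simp only [monomialIdeal, Ideal.span_mul_span', ← Set.image2_mul, ← Set.image2_add,
    Set.image2_image_left, Set.image2_image_right, Set.image_image2, monomial_mul, mul_one]

lemma monomialIdeal_le_sup_iff [Nontrivial R] (hST : ∀ s ∈ S, ∀ t ∈ T, ¬ t ≤ s) :
    monomialIdeal R S ≤ monomialIdeal R T ⊔ monomialIdeal R U ↔
      monomialIdeal R S ≤ monomialIdeal R U := by
  rw [← monomialIdeal_union, monomialIdeal_le_iff, monomialIdeal_le_iff]
  refine forall₂_congr fun s hs => ⟨?_, fun ⟨t, ht, hts⟩ => ⟨t, Or.inr ht, hts⟩⟩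
  rintro ⟨t, ht | ht, hts⟩
  · exact absurd hts (hST s hs t ht)
  · exact ⟨t, ht, hts⟩

lemma monomialIdeal_le_iff_subset [Nontrivial R] {m : ℕ} (hS : ∀ s ∈ S, s.degree = m)
    (hT : ∀ t ∈ T, t.degree = m) : monomialIdeal R S ≤ monomialIdeal R T ↔ S ⊆ T := by
  rw [monomialIdeal_le_iff]
  refine ⟨fun h s hs => ?_, fun h s hs => ⟨s, h hs, le_rfl⟩⟩
  obtain ⟨t, ht, hts⟩ := h s hs
  have hdeg : (s - t).degree + t.degree = s.degree := by rw [← map_add, tsub_add_cancel_of_le hts]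
  have hst : s - t = 0 := by
    rw [← Finsupp.degree_eq_zero_iff]
    have := hS s hs
    have := hT t ht
    omega
  rwa [hts.antisymm (tsub_eq_zero_iff_le.1 hst)] at ht

lemma monomialIdeal_colon_idealOfVars :
    (monomialIdeal R S).colon (idealOfVars σ R : Set (MvPolynomial σ R)) =
      monomialIdeal R {s | ∀ i, ∃ t ∈ S, t ≤ s + Finsupp.single i 1} := by
  ext p
  simp only [idealOfVars, Ideal.colon_span, Submodule.mem_colon, Set.forall_mem_range, smul_eq_mul,
    mem_monomialIdeal, support_mul_X, Finset.forall_mem_map, addRightEmbedding_apply]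
  constructor
  · exact fun h s hs => ⟨s, fun i => h i s hs, le_rfl⟩
  · intro h i s hs
    obtain ⟨r, hr, hrs⟩ := h s hs
    obtain ⟨t, ht, htr⟩ := hr i
    exact ⟨t, ht, htr.trans (add_le_add_left hrs _)⟩

end MonomialIdeal

section VeroneseIdeal

variable {σ R : Type*} [CommSemiring R] {a b c : σ →₀ ℕ} {d e f : ℕ}

variable (R) in
/-- The ideal of Veronese type `I_{c,e}`. -/
noncomputable def veroneseIdeal (c : σ →₀ ℕ) (e : ℕ) : Ideal (MvPolynomial σ R) :=
  monomialIdeal R (veroneseExponents c e)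

lemma veroneseIdeal_equivFunOnFinite_symm [Fintype σ] (a : σ → ℕ) :
    veroneseIdeal R (Finsupp.equivFunOnFinite.symm a) d =
      Ideal.span {p | ∃ u : σ → ℕ, (∑ i, u i) = d ∧ (∀ i, u i ≤ a i) ∧ p = ∏ i, X i ^ u i} := by
  rw [veroneseIdeal, monomialIdeal]
  congr 1
  ext p
  rw [Set.mem_image, Finsupp.equivFunOnFinite.exists_congr_left]
  refine exists_congr fun u => ?_
  simp [veroneseExponents, monomial_eq, Finsupp.prod_fintype, Finsupp.degree_eq_sum,
    Finsupp.le_def, and_assoc, and_left_comm, eq_comm (a := p)]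

lemma veroneseIdeal_mul_le :
    veroneseIdeal R c e * veroneseIdeal R b f ≤ veroneseIdeal R (c + b) (e + f) := by
  rw [veroneseIdeal, veroneseIdeal, monomialIdeal_mul]
  exact Ideal.span_mono (Set.image_mono veroneseExponents_add_subset)

lemma veroneseIdeal_mul
    (h : ∀ A : Finset σ,
      (e < ∑ i ∈ A, c i → f ≤ ∑ i ∈ A, b i) ∧ (f < ∑ i ∈ A, b i → e ≤ ∑ i ∈ A, c i)) :
    veroneseIdeal R c e * veroneseIdeal R b f = veroneseIdeal R (c + b) (e + f) := by
  rw [veroneseIdeal, veroneseIdeal, monomialIdeal_mul, veroneseExponents_add h, veroneseIdeal]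

theorem veroneseIdeal_mul_eq_iff [Nontrivial R] (hcb : e + f ≤ (c + b).degree) :
    veroneseIdeal R c e * veroneseIdeal R b f = veroneseIdeal R (c + b) (e + f) ↔
      ∀ A : Finset σ,
        (e < ∑ i ∈ A, c i → f ≤ ∑ i ∈ A, b i) ∧ (f < ∑ i ∈ A, b i → e ≤ ∑ i ∈ A, c i) := by
  refine ⟨fun h => (veroneseExponents_add_eq_iff hcb).1 ?_, veroneseIdeal_mul⟩
  rw [veroneseIdeal, veroneseIdeal, monomialIdeal_mul] at h
  exact veroneseExponents_add_subset.antisymm <| (monomialIdeal_le_iff_subset (fun _ hs => hs.2)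
    fun _ ht => (veroneseExponents_add_subset ht).2).1 h.ge

theorem veroneseIdeal_pow (a : σ →₀ ℕ) (d k : ℕ) :
    veroneseIdeal R a d ^ k = veroneseIdeal R (k • a) (k * d) := by
  induction k with
  | zero =>
    have : veroneseExponents (0 : σ →₀ ℕ) 0 = {0} := by
      ext u
      simp +contextual [veroneseExponents]
    simp [veroneseIdeal, monomialIdeal, this]
  | succ k ih =>
    rw [pow_succ, ih, succ_nsmul, add_one_mul]
    refine veroneseIdeal_mul fun A => ?_
    simp only [Finsupp.smul_apply, smul_eq_mul, ← Finset.mul_sum]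
    exact ⟨fun h => (lt_of_mul_lt_mul_left h k.zero_le).le, fun h => Nat.mul_le_mul_left k h.le⟩

variable (σ) in
/-- The vector `(1, …, 1)`. -/
noncomputable def allOnes [Finite σ] : σ →₀ ℕ := Finsupp.equivFunOnFinite.symm 1

@[simp]
lemma allOnes_apply [Finite σ] (i : σ) : allOnes σ i = 1 := rfl

lemma mem_veroneseExponents_of_forall_exists_le [Finite σ] [Nonempty σ] {s : σ →₀ ℕ}
    (hlt : (s ⊓ (c + allOnes σ)).degree ≤ e)
    (hs : ∀ i, ∃ t ∈ veroneseExponents (c + allOnes σ) (e + 1), t ≤ s + Finsupp.single i 1) :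
    s ∈ veroneseExponents c e := by
  classical
  have hsc : s ≤ c := fun i => by
    by_contra! hci
    obtain ⟨t, ⟨htc, ht⟩, hts⟩ := hs i
    have hts' : t ≤ s := fun j => by
      rcases eq_or_ne j i with rfl | hj
      · exact (htc j).trans hci
      · simpa [hj] using hts j
    have hle : t ≤ s ⊓ (c + allOnes σ) := le_inf hts' htc
    have := Finsupp.degree_mono hle
    omega
  rw [inf_eq_left.2 (hsc.trans le_self_add)] at hlt
  obtain ⟨t, ⟨-, ht⟩, hts⟩ := hs (Classical.arbitrary σ)
  have hdeg := Finsupp.degree_mono hts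
  rw [map_add, Finsupp.degree_single] at hdeg
  exact ⟨hsc, by omega⟩

theorem veroneseIdeal_colon_idealOfVars [Finite σ] [Nonempty σ] [Nontrivial R] (c : σ →₀ ℕ)
    (e : ℕ) :
    (veroneseIdeal R (c + allOnes σ) (e + 1)).colon (idealOfVars σ R : Set (MvPolynomial σ R)) =
      veroneseIdeal R (c + allOnes σ) (e + 1) ⊔ veroneseIdeal R c e := by
  simp only [veroneseIdeal, monomialIdeal_colon_idealOfVars, ← monomialIdeal_union]
  apply le_antisymm <;> rw [monomialIdeal_le_iff]
  · intro s hs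
    rcases Nat.lt_or_ge e (s ⊓ (c + allOnes σ)).degree with hlt | hle
    · obtain ⟨t, ht, hdeg⟩ := Finsupp.exists_le_degree_eq _ _ hlt
      exact ⟨t, Or.inl ⟨ht.trans inf_le_right, hdeg⟩, ht.trans inf_le_left⟩
    · exact ⟨s, Or.inr (mem_veroneseExponents_of_forall_exists_le hle hs), le_rfl⟩
  · rintro s (hs | ⟨hsc, hse⟩) <;> refine ⟨s, fun i => ?_, le_rfl⟩
    · exact ⟨s, hs, le_self_add⟩
    · have hi : Finsupp.single i 1 ≤ allOnes σ := by simp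
      exact ⟨s + Finsupp.single i 1, ⟨add_le_add hsc hi, by simp [hse]⟩, le_rfl⟩

theorem veroneseIdeal_colon_eq_sup_mul_colon_iff [Finite σ] [Nonempty σ] [Nontrivial R] :
    (veroneseIdeal R (a + b + allOnes σ) (d + f + 1)).colon
        (idealOfVars σ R : Set (MvPolynomial σ R)) =
      veroneseIdeal R (a + b + allOnes σ) (d + f + 1) ⊔ veroneseIdeal R a d *
        (veroneseIdeal R (b + allOnes σ) (f + 1)).colon
          (idealOfVars σ R : Set (MvPolynomial σ R)) ↔
      veroneseIdeal R a d * veroneseIdeal R b f = veroneseIdeal R (a + b) (d + f) := by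
  set J := veroneseIdeal R (a + b + allOnes σ) (d + f + 1) with hJ
  have habsorb : veroneseIdeal R a d * veroneseIdeal R (b + allOnes σ) (f + 1) ≤ J := by
    rw [hJ, add_assoc, add_assoc]
    exact veroneseIdeal_mul_le
  have hdegree : veroneseIdeal R (a + b) (d + f) ≤ J ⊔ veroneseIdeal R a d * veroneseIdeal R b f ↔
      veroneseIdeal R (a + b) (d + f) ≤ veroneseIdeal R a d * veroneseIdeal R b f := by
    simp only [hJ, veroneseIdeal, monomialIdeal_mul]
    refine monomialIdeal_le_sup_iff fun s hs t ht hts => ?_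
    have := Finsupp.degree_mono hts
    rw [hs.2, ht.2] at this
    omega
  rw [hJ, veroneseIdeal_colon_idealOfVars, ← hJ, veroneseIdeal_colon_idealOfVars, Ideal.mul_sup,
    ← sup_assoc, sup_eq_left.2 habsorb, ← veroneseIdeal_mul_le.ge_iff_eq, ← hdegree]
  exact ⟨fun h => h ▸ le_sup_right,
    fun h => (sup_le le_sup_left h).antisymm (sup_le_sup_left veroneseIdeal_mul_le _)⟩

end VeroneseIdeal

section Socle

variable {σ R : Type*} {a b : σ →₀ ℕ} {d f k : ℕ}

lemma sum_add_card_eq_mul_sum [Finite σ] (hb : k • a = b + allOnes σ) (A : Finset σ) :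
    ∑ i ∈ A, b i + A.card = k * ∑ i ∈ A, a i := by
  have hbi (i : σ) : b i + 1 = k * a i := by simpa using (DFunLike.congr_fun hb i).symm
  rw [Finset.card_eq_sum_ones, ← Finset.sum_add_distrib, Finset.mul_sum]
  exact Finset.sum_congr rfl fun i _ => hbi i

lemma sum_le_and_le_sum_iff_card_le [Finite σ] (hb : k • a = b + allOnes σ)
    (hf : k * d = f + 1) (A : Finset σ) :
    (d < ∑ i ∈ A, a i → f ≤ ∑ i ∈ A, b i) ∧ (f < ∑ i ∈ A, b i → d ≤ ∑ i ∈ A, a i) ↔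
      (d < ∑ i ∈ A, a i → A.card - 1 ≤ k * (∑ i ∈ A, a i - d)) := by
  have hA := sum_add_card_eq_mul_sum hb A
  have hk : k ≠ 0 := by
    rintro rfl
    omega
  rcases Nat.lt_or_ge (∑ i ∈ A, a i) d with hlt | hge
  · have := Nat.mul_le_mul_left k hlt
    rw [Nat.mul_succ] at this
    omega
  · obtain ⟨q, hq⟩ := Nat.exists_eq_add_of_le hge
    rw [hq, mul_add] at hA
    rw [hq, add_tsub_cancel_left]
    omega

variable [CommSemiring R] [Nontrivial R] [Fintype σ]

theorem veroneseIdeal_pow_colon_eq_iff (ha : ∀ i, 1 ≤ a i) (hd : 1 ≤ d) (hda : d ≤ a.degree)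
    (hk : 1 ≤ k) (hcard : Fintype.card σ - 1 ≤ (k + 1) * (a.degree - d)) :
    (veroneseIdeal R a d ^ (k + 1)).colon (idealOfVars σ R : Set (MvPolynomial σ R)) =
        veroneseIdeal R a d ^ (k + 1) ⊔ veroneseIdeal R a d *
          (veroneseIdeal R a d ^ k).colon (idealOfVars σ R : Set (MvPolynomial σ R)) ↔
      ∀ A : Finset σ, d < ∑ i ∈ A, a i → A.card - 1 ≤ k * (∑ i ∈ A, a i - d) := by
  have : Nonempty σ := by
    by_contra! hσ
    have : a.degree = 0 := by simp [Finsupp.degree_eq_sum]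
    omega
  obtain ⟨b, hb⟩ : ∃ b, k • a = b + allOnes σ :=
    ⟨k • a - allOnes σ, (tsub_add_cancel_of_le fun i => Nat.mul_pos hk (ha i)).symm⟩
  obtain ⟨f, hf⟩ : ∃ f, k * d = f + 1 := ⟨k * d - 1, by have := Nat.mul_pos hk hd; omega⟩
  have hdeg : d + f ≤ (a + b).degree := by
    have hbσ := sum_add_card_eq_mul_sum hb Finset.univ
    rw [← Finsupp.degree_eq_sum, ← Finsupp.degree_eq_sum, Finset.card_univ] at hbσ
    obtain ⟨q, hq⟩ := Nat.exists_eq_add_of_le hda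
    rw [hq, add_tsub_cancel_left, add_one_mul] at hcard
    rw [hq, mul_add] at hbσ
    rw [map_add]
    omega
  rw [veroneseIdeal_pow, veroneseIdeal_pow, succ_nsmul', add_one_mul, add_comm (k * d), hb, hf,
    ← add_assoc, ← add_assoc, veroneseIdeal_colon_eq_sup_mul_colon_iff,
    veroneseIdeal_mul_eq_iff hdeg]
  exact forall_congr' fun A => sum_le_and_le_sum_iff_card_le hb hf A

theorem veronese_socle_equigenerated_iff_general {k₀ : ℕ} (ha : ∀ i, 1 ≤ a i) (hd : 1 ≤ d)
    (hda : d ≤ a.degree) (hk₀ : 1 ≤ k₀)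
    (hcard : Fintype.card σ - 1 ≤ (k₀ + 1) * (a.degree - d)) :
    (∀ k : ℕ, k₀ ≤ k →
        (veroneseIdeal R a d ^ (k + 1)).colon (idealOfVars σ R : Set (MvPolynomial σ R)) =
          veroneseIdeal R a d ^ (k + 1) ⊔ veroneseIdeal R a d *
            (veroneseIdeal R a d ^ k).colon (idealOfVars σ R : Set (MvPolynomial σ R))) ↔
      ∀ A : Finset σ, d < ∑ i ∈ A, a i → A.card - 1 ≤ k₀ * (∑ i ∈ A, a i - d) := by
  refine ⟨fun h => (veroneseIdeal_pow_colon_eq_iff ha hd hda hk₀ hcard).1 (h k₀ le_rfl),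
    fun h k hk => ?_⟩
  have hcard_k := hcard.trans (Nat.mul_le_mul_right _ (Nat.succ_le_succ hk))
  exact (veroneseIdeal_pow_colon_eq_iff ha hd hda (hk₀.trans hk) hcard_k).2
    fun A hA => (h A hA).trans (Nat.mul_le_mul_right _ hk)

end Socle

/-- For an ideal `I = I_{a,d}` of Veronese type with `aᵢ ≥ 1` for all `i`
and `a₁ + ⋯ + aₙ > d`, and `k₀` the least `k ≥ 1` with `k(Σa - d) ≥ n - 1`, the module
`Soc*(I)` is equi-generated (i.e. `(I^{k+1} : 𝔪) = I^{k+1} + I·(I^k : 𝔪)` for every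
`k ≥ k₀`) if and only if for every `A ⊆ [n]` with `a(A) > d` one has
`k₀(a(A) - d) ≥ |A| - 1`. -/
theorem veronese_socle_equigenerated_iff
    {K : Type*} [Field K] {n : ℕ} (a : Fin n → ℕ) (d : ℕ)
    (ha : ∀ i, 1 ≤ a i) (hd : 1 ≤ d) (hsum : d < ∑ i, a i)
    (I : Ideal (MvPolynomial (Fin n) K))
    (hI : I = Ideal.span {f | ∃ u : Fin n → ℕ, (∑ i, u i) = d ∧ (∀ i, u i ≤ a i) ∧
        f = ∏ i, X i ^ u i})
    (mI : Ideal (MvPolynomial (Fin n) K)) (hmI : mI = Ideal.span (Set.range X))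
    (k₀ : ℕ) (hk₀1 : 1 ≤ k₀) (hk₀2 : n - 1 ≤ k₀ * ((∑ i, a i) - d))
    (hk₀min : ∀ k : ℕ, 1 ≤ k → n - 1 ≤ k * ((∑ i, a i) - d) → k₀ ≤ k) :
    (∀ k : ℕ, k₀ ≤ k →
        (I ^ (k + 1)).colon mI = I ^ (k + 1) ⊔ I * ((I ^ k).colon mI)) ↔
    (∀ A : Finset (Fin n), d < ∑ i ∈ A, a i →
        A.card - 1 ≤ k₀ * ((∑ i ∈ A, a i) - d)) := by
  subst hI hmI
  rw [← veroneseIdeal_equivFunOnFinite_symm]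
  have hdeg : (Finsupp.equivFunOnFinite.symm a).degree = ∑ i, a i := Finsupp.degree_eq_sum _
  exact veronese_socle_equigenerated_iff_general ha hd (hdeg ▸ hsum.le) hk₀1
    (by simpa [hdeg] using hk₀2.trans (Nat.mul_le_mul_right _ k₀.le_succ))
end
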